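/- arXiv:1507.07186 — 2 statements merged into one kernel-verified Lean document; each statement's English description precedes it below -/
import Mathlib

section
/- Let A be a C*-algebra and let F be a JB*-subtriple of A such that no element of F is Brown–Pedersen quasi-invertible in F. Then dist(e, F) = 1 for every extreme point e of the closed unit ball of A. If moreover F is a Chebyshev subspace of A, then π_F(e) = 0 for every such extreme point e. -/
/-!
Let `e` be an extreme point of the closed unit ball. Since `e` is the midpoint of
`(e + e e* e) / 2` and `(3 e - e e* e) / 2`, both of norm at most one, `e` is a partial isometry;
and every `d` orthogonal to `e` vanishes, because `e ± d` stay in the ball when `‖d‖ ≤ 1`.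

If `‖e - x‖ < 1`, a Neumann series yields `w` with `e* x w = e* = w x e*`. Then `x w x - x` and all
`(1 - x w) z (1 - w x)` are orthogonal to `e`, hence zero. In particular `x` is von Neumann regular,
so zero is isolated in the spectrum of `x* x` and the generalized inverse `x†` can be built by
functional calculus inside every closed subtriple containing `x`. It satisfies `x (x†)* x = x`,
which allows `w` to be replaced by `(x†)*`, so `x` is Brown–Pedersen quasi-invertible, with
`B(x, x†) = 0`. Hence a closed subtriple without quasi-invertible elements has distance one to `e`.
-/

open Filter Topology

section ExtremePoints

theorem eq_zero_of_mem_extremePoints {E : Type*} [AddCommGroup E] [Module ℝ E] {s : Set E}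
    {x d : E} (hx : x ∈ s.extremePoints ℝ) (hadd : x + d ∈ s) (hsub : x - d ∈ s) : d = 0 := by
  have hmid : x ∈ openSegment ℝ (x + d) (x - d) :=
    ⟨1 / 2, 1 / 2, by norm_num, by norm_num, by norm_num, by module⟩
  simpa using (mem_extremePoints.mp hx).2 _ hadd _ hsub hmid

variable {A : Type*} [NonUnitalCStarAlgebra A]

theorem norm_three_halves_smul_sub_le_one {x : A} (hx : ‖x‖ ≤ 1) :
    ‖(3 / 2 : ℝ) • x - (1 / 2 : ℝ) • (x * star x * x)‖ ≤ 1 := by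
  let _ : PartialOrder A := CStarAlgebra.spectralOrder A
  have _ : StarOrderedRing A := CStarAlgebra.spectralOrderedRing A
  set y := (3 / 2 : ℝ) • x - (1 / 2 : ℝ) • (x * star x * x)
  set h := star x * x with hh
  have h_nonneg : 0 ≤ h := star_mul_self_nonneg x
  have h_norm : ‖h‖ ≤ 1 := by
    rw [hh, CStarRing.norm_star_mul_self]
    exact mul_le_one₀ hx (norm_nonneg x) hx
  have hy : star y * y =
      cfcₙ (fun t : ℝ ↦ 9 / 4 * t - 3 / 2 * (t * t) + 1 / 4 * (t * t * t)) h := by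
    rw [cfcₙ_add .., cfcₙ_sub .., cfcₙ_const_mul .., cfcₙ_const_mul .., cfcₙ_const_mul ..,
      cfcₙ_mul .., cfcₙ_mul .., cfcₙ_mul .., cfcₙ_id' ℝ h]
    simp only [y, hh, star_sub, star_smul, star_mul, star_star, star_trivial, sub_mul, mul_sub,
      smul_mul_assoc, mul_smul_comm, mul_assoc]
    module
  suffices ‖star y * y‖ ≤ 1 by
    rw [CStarRing.norm_star_mul_self] at this
    nlinarith [norm_nonneg y]
  rw [hy]
  refine norm_cfcₙ_le fun t ht ↦ ?_
  have ht_nonneg : 0 ≤ t := quasispectrum_nonneg_of_nonneg h h_nonneg t ht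
  have ht_le : t ≤ 1 := (Real.le_norm_self t).trans <|
    (NonUnitalIsometricContinuousFunctionalCalculus.norm_quasispectrum_le h ht).trans h_norm
  have h_factor : 9 / 4 * t - 3 / 2 * (t * t) + 1 / 4 * (t * t * t) = t * ((3 - t) / 2) ^ 2 := by
    ring
  rw [h_factor, Real.norm_of_nonneg (by positivity), ← sub_nonneg]
  calc 0 ≤ (1 - t) ^ 2 * (4 - t) / 4 := by
        have : 0 ≤ 4 - t := by linarith
        positivity
    _ = 1 - t * ((3 - t) / 2) ^ 2 := by ring

theorem mul_star_mul_self_of_mem_extremePoints {e : A}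
    (he : e ∈ (Metric.closedBall (0 : A) 1).extremePoints ℝ) : e * star e * e = e := by
  have he_norm : ‖e‖ ≤ 1 := by simpa using he.1
  have h_triple_norm : ‖e * star e * e‖ ≤ 1 := calc
    ‖e * star e * e‖ ≤ ‖e * star e‖ * ‖e‖ := norm_mul_le _ _
    _ = ‖e‖ * ‖e‖ * ‖e‖ := by rw [CStarRing.norm_self_mul_star]
    _ ≤ 1 * 1 * 1 := by gcongr
    _ = 1 := by norm_num
  have hd : (1 / 2 : ℝ) • (e - e * star e * e) = 0 := by
    refine eq_zero_of_mem_extremePoints he ?_ ?_ <;> rw [mem_closedBall_zero_iff]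
    · calc ‖e + (1 / 2 : ℝ) • (e - e * star e * e)‖
          = ‖(3 / 2 : ℝ) • e - (1 / 2 : ℝ) • (e * star e * e)‖ := by congr 1; module
        _ ≤ 1 := norm_three_halves_smul_sub_le_one he_norm
    · calc ‖e - (1 / 2 : ℝ) • (e - e * star e * e)‖
          = ‖(1 / 2 : ℝ) • e + (1 / 2 : ℝ) • (e * star e * e)‖ := by congr 1; module
        _ ≤ 1 / 2 * ‖e‖ + 1 / 2 * ‖e * star e * e‖ := by
          simpa [norm_smul] using
            norm_add_le ((1 / 2 : ℝ) • e) ((1 / 2 : ℝ) • (e * star e * e))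
        _ ≤ 1 := by linarith
  exact (sub_eq_zero.mp ((smul_eq_zero.mp hd).resolve_left (by norm_num))).symm

theorem norm_add_eq_max_of_orthogonal {a b : A} (hab : star a * b = 0) (hab' : b * star a = 0) :
    ‖a + b‖ = max ‖a‖ ‖b‖ := by
  have hba : star b * a = 0 := by simpa using congr(star $hab)
  have hba' : a * star b = 0 := by simpa using congr(star $hab')
  have h_mul : star a * a * (star b * b) = 0 := by
    rw [mul_assoc, ← mul_assoc a, hba', zero_mul, mul_zero]
  have h_sq : ‖a + b‖ ^ 2 = max ‖a‖ ‖b‖ ^ 2 := calc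
    ‖a + b‖ ^ 2 = ‖star a * a + star b * b‖ := by
      rw [sq, ← CStarRing.norm_star_mul_self, star_add, add_mul, mul_add, mul_add, hab, hba,
        add_zero, zero_add]
    _ = max (‖a‖ ^ 2) (‖b‖ ^ 2) := by
      rw [(IsSelfAdjoint.star_mul_self a).norm_add_eq_max (.star_mul_self b) h_mul,
        CStarRing.norm_star_mul_self, CStarRing.norm_star_mul_self, sq, sq]
    _ = max ‖a‖ ‖b‖ ^ 2 :=
      ((pow_left_monotoneOn (n := 2)).map_max (norm_nonneg a) (norm_nonneg b)).symm
  exact (pow_left_inj₀ (norm_nonneg _) (by positivity) two_ne_zero).mp h_sq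

theorem eq_zero_of_orthogonal_of_mem_extremePoints {e d : A}
    (he : e ∈ (Metric.closedBall (0 : A) 1).extremePoints ℝ)
    (hed : star e * d = 0) (hde : d * star e = 0) : d = 0 := by
  have h_mem_ball (c : ℝ) (hc : ‖c • d‖ ≤ 1) : e + c • d ∈ Metric.closedBall (0 : A) 1 := by
    rw [mem_closedBall_zero_iff, norm_add_eq_max_of_orthogonal
      (by rw [mul_smul_comm, hed, smul_zero]) (by rw [smul_mul_assoc, hde, smul_zero])]
    exact max_le (by simpa using he.1) hc
  have h_norm : ‖‖d‖⁻¹ • d‖ ≤ 1 := by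
    simpa [norm_smul] using inv_mul_le_one
  have h_smul : ‖d‖⁻¹ • d = 0 := eq_zero_of_mem_extremePoints he (h_mem_ball _ h_norm) <| by
    rw [sub_eq_add_neg, ← neg_smul]
    exact h_mem_ball _ (by rwa [neg_smul, norm_neg])
  simpa using h_smul

end ExtremePoints

section TripleProduct

variable {A : Type*} [NonUnitalRing A] [Star A]

/-- The triple product `{x, y, z} = (x y* z + z y* x) / 2`. The scalar is taken in `ℝ`, so that
real subspaces closed under it (real subtriples) make sense. -/
noncomputable def tripleProduct [Module ℝ A] (x y z : A) : A :=
  (2 : ℝ)⁻¹ • (x * star y * z + z * star y * x)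

/-- The Bergmann operator `B(x, y)` of the triple product, evaluated at `z`. An element `x` is
Brown–Pedersen quasi-invertible when `B(x, y) = 0` for some `y`. -/
def bergmann (x y z : A) : A :=
  z - x * star y * z - z * star y * x + x * star y * z * star y * x

-- In the unitization, `bergmann x y z = (1 - x y*) z (1 - y* x)`.
theorem bergmann_bergmann {x y : A} (hxy : x * star y * x = x) (w z : A) :
    bergmann x y (bergmann x w z) = bergmann x y z := by
  have h_left (a : A) : x * (star y * (x * a)) = x * a := by
    simp only [← mul_assoc, hxy]
  have h_right : x * (star y * x) = x := by rw [← mul_assoc, hxy]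
  simp only [bergmann, mul_sub, sub_mul, mul_add, add_mul, mul_assoc, h_left, h_right]
  abel

end TripleProduct

section NearExtremePoints

variable {A : Type*} [NonUnitalCStarAlgebra A]

theorem isQuasiregular_of_norm_lt_one {a : A} (ha : ‖a‖ < 1) : IsQuasiregular a := by
  rw [← Unitization.isQuasiregular_inr_iff (R := ℂ), isQuasiregular_iff_isUnit,
    ← sub_neg_eq_add]
  exact isUnit_one_sub_of_norm_lt_one (by rwa [norm_neg, Unitization.norm_inr])

theorem exists_mul_mul_star_eq_star {e x : A} (he : e * star e * e = e) (he_norm : ‖e‖ ≤ 1)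
    (hx : ‖e - x‖ < 1) : ∃ w : A, star e * x * w = star e ∧ w * x * star e = star e := by
  have he_star : star e * e * star e = star e := by simpa [mul_assoc] using congr(star $he)
  have hs_norm : ‖star e * (x - e)‖ < 1 := calc
    ‖star e * (x - e)‖ ≤ ‖e‖ * ‖e - x‖ := by
      simpa [norm_sub_rev] using norm_mul_le (star e) (x - e)
    _ ≤ 1 * ‖e - x‖ := by gcongr
    _ < 1 := by rwa [one_mul]
  obtain ⟨t, h_right, h_left⟩ := isQuasiregular_iff.mp (isQuasiregular_of_norm_lt_one hs_norm)
  set s := star e * (x - e) with hs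
  have hps : star e * e * s = s := by rw [hs, ← mul_assoc, he_star]
  have hpt : star e * e * t = t := by
    have ht : t = -(s + s * t) := by rw [eq_neg_iff_add_eq_zero, ← add_assoc, h_right]
    calc star e * e * t = -(star e * e * s + star e * e * s * t) := by
          rw [mul_assoc _ s, ← mul_add, ← mul_neg, ← ht]
      _ = t := by rw [hps, ← ht]
  have hx_eq : star e * x = star e * e + s := by rw [hs, mul_sub]; abel
  -- `w = (1 + s)⁻¹ e*`, with `(1 + s)⁻¹ = 1 + t` in the unitization.
  refine ⟨star e + t * star e, ?_, ?_⟩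
  · calc star e * x * (star e + t * star e)
        = star e * e * star e + (star e * e * t + s + s * t) * star e := by
          rw [hx_eq]; noncomm_ring
      _ = star e := by rw [he_star, hpt, h_right, zero_mul, add_zero]
  · calc (star e + t * star e) * x * star e
        = star e * e * star e + s * star e + t * (star e * e * star e) + t * s * star e := by
          rw [add_mul, mul_assoc t, hx_eq]; noncomm_ring
      _ = star e + (s + t + t * s) * star e := by rw [he_star]; noncomm_ring
      _ = star e := by rw [h_left, zero_mul, add_zero]

theorem exists_regular_and_bergmann_eq_zero {e x : A}
    (he : e ∈ (Metric.closedBall (0 : A) 1).extremePoints ℝ) (hx : ‖e - x‖ < 1) :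
    ∃ y : A, x * star y * x = x ∧ ∀ z, bergmann x y z = 0 := by
  obtain ⟨w, h_left, h_right⟩ := exists_mul_mul_star_eq_star
    (mul_star_mul_self_of_mem_extremePoints he) (by simpa using he.1) hx
  refine ⟨star w, ?_, fun z ↦ ?_⟩
  · rw [star_star, ← sub_eq_zero]
    refine eq_zero_of_orthogonal_of_mem_extremePoints he ?_ ?_
    · rw [mul_sub, ← mul_assoc, ← mul_assoc, h_left, sub_self]
    · rw [sub_mul, mul_assoc x, mul_assoc x, h_right, sub_self]
  · rw [bergmann, star_star]
    refine eq_zero_of_orthogonal_of_mem_extremePoints he ?_ ?_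
    · calc _ = star e * z - star e * x * w * z - star e * z * w * x
              + star e * x * w * z * w * x := by noncomm_ring
        _ = 0 := by rw [h_left]; noncomm_ring
    · calc _ = z * star e - x * w * z * star e - z * (w * x * star e)
              + x * w * z * (w * x * star e) := by noncomm_ring
        _ = 0 := by rw [h_right]; noncomm_ring

end NearExtremePoints

section GeneralizedInverse

theorem continuousOn_inv_of_eventually_eq_zero {s : Set ℝ}
    (hs : ∀ᶠ t in 𝓝[s] (0 : ℝ), t = 0) : ContinuousOn (fun t : ℝ ↦ t⁻¹) s := by
  intro t _
  rcases eq_or_ne t 0 with rfl | ht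
  · exact continuousWithinAt_const.congr_of_eventuallyEq (hs.mono fun _ h ↦ by rw [h]) rfl
  · exact (continuousAt_inv₀ ht).continuousWithinAt

variable {A : Type*} [NonUnitalCStarAlgebra A]

/-- The generalized inverse `x†` of `x` in the triple sense, i.e. the adjoint of the Moore–Penrose
inverse. It is only meaningful when `x` is von Neumann regular: otherwise inversion is
discontinuous on the quasispectrum of `star x * x` and the functional calculus returns `0`. -/
noncomputable def generalizedInverse (x : A) : A :=
  x * cfcₙ (fun t : ℝ ↦ t⁻¹) (star x * x)

theorem quasispectrum_star_mul_self_eventually_eq_zero {x w : A} (hw : x * w * x = x) :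
    ∀ᶠ t in 𝓝[quasispectrum ℝ (star x * x)] (0 : ℝ), t = 0 := by
  let _ : PartialOrder A := CStarAlgebra.spectralOrder A
  have _ : StarOrderedRing A := CStarAlgebra.spectralOrderedRing A
  set h := star x * x with hh
  have h_nonneg : 0 ≤ h := star_mul_self_nonneg x
  set C := ‖w * star w‖
  have h_le : h ≤ C • (h * h) := calc
    h ≤ h * (w * star w) * h := by
      -- `(w* x* x - x)* (w* x* x - x) ≥ 0`
      have hw_star : star x * star w * star x = star x := by
        simpa [mul_assoc] using congr(star $hw)
      rw [← sub_nonneg]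
      convert star_mul_self_nonneg (star w * star x * x - x) using 1
      calc h * (w * star w) * h - h
          = h * (w * star w) * h - star x * (x * w * x) - star x * star w * star x * x
              + star x * x := by rw [hw, hw_star, ← hh]; abel
        _ = _ := by
          simp only [hh, star_sub, star_mul, star_star]
          noncomm_ring
    _ ≤ C • (h * h) := by
      simpa only [h_nonneg.isSelfAdjoint.star_eq] using
        CStarAlgebra.star_left_conjugate_le_norm_smul (a := h) (IsSelfAdjoint.mul_star_self w)
  have h_gap : ∀ t ∈ quasispectrum ℝ h, t ≤ C * (t * t) := by
    rw [← cfcₙ_le_iff (fun t : ℝ ↦ t) (fun t ↦ C * (t * t)) h, cfcₙ_const_mul ..,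
      cfcₙ_mul .., cfcₙ_id' ℝ h]
    exact h_le
  have h_small : ∀ᶠ t : ℝ in 𝓝 0, C * t < 1 :=
    (continuous_const_mul C).continuousAt.eventually_lt continuousAt_const (by simp)
  filter_upwards [nhdsWithin_le_nhds h_small, self_mem_nhdsWithin] with t ht_small ht
  nlinarith [h_gap t ht, quasispectrum_nonneg_of_nonneg h h_nonneg t ht]

theorem mul_star_generalizedInverse_mul {x w : A} (hw : x * w * x = x) :
    x * star (generalizedInverse x) * x = x := by
  have h_cont : ContinuousOn (fun t : ℝ ↦ t⁻¹) (quasispectrum ℝ (star x * x)) :=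
    continuousOn_inv_of_eventually_eq_zero (quasispectrum_star_mul_self_eventually_eq_zero hw)
  set h := star x * x with hh
  set k := cfcₙ (fun t : ℝ ↦ t⁻¹) h with hk
  have hk_star : star k = k := (cfcₙ_predicate (fun t : ℝ ↦ t⁻¹) h).star_eq
  have h_kh : h * (k * h) = h := by
    have h_sa : IsSelfAdjoint h := .star_mul_self x
    calc h * (k * h) = cfcₙ (fun t : ℝ ↦ t * (t⁻¹ * t)) h := by
          rw [cfcₙ_mul .., cfcₙ_mul .., cfcₙ_id' ℝ h]
      _ = h := by
          simp only [← mul_assoc, mul_inv_mul_cancel]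
          exact cfcₙ_id' ℝ h
  rw [generalizedInverse, ← hh, ← hk, star_mul, hk_star, mul_assoc, mul_assoc, ← hh,
    ← sub_eq_zero, ← CStarRing.star_mul_self_eq_zero_iff]
  calc star (x * (k * h) - x) * (x * (k * h) - x)
      = star (k * h) * (h * (k * h)) - star (k * h) * h - (h * (k * h) - h) := by
        simp only [hh, star_sub, star_mul]; noncomm_ring
    _ = 0 := by rw [h_kh, sub_self, sub_self, sub_zero]

theorem bergmann_generalizedInverse_eq_zero {e x : A}
    (he : e ∈ (Metric.closedBall (0 : A) 1).extremePoints ℝ) (hx : ‖e - x‖ < 1) (z : A) :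
    bergmann x (generalizedInverse x) z = 0 := by
  obtain ⟨y, hy, hB⟩ := exists_regular_and_bergmann_eq_zero he hx
  rw [← bergmann_bergmann (mul_star_generalizedInverse_mul hy) y z, hB]
  simp [bergmann]

end GeneralizedInverse

section Subtriples

variable {A : Type*} [NonUnitalCStarAlgebra A]

theorem mul_cfcₙ_mem {G : Submodule ℝ A} (hG : IsClosed (G : Set A)) {h : A}
    (hh : IsSelfAdjoint h) (hmul : ∀ v ∈ G, v * h ∈ G) (f : ℝ → ℝ) {v : A} (hv : v ∈ G) :
    v * cfcₙ f h ∈ G := by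
  have h_adjoin : ∀ k ∈ NonUnitalStarAlgebra.adjoin ℝ {h}, ∀ v ∈ G, v * k ∈ G := by
    intro k hk
    induction hk using NonUnitalAlgebra.adjoin_induction with
    | mem k hk =>
      rw [Set.star_singleton, hh.star_eq, Set.union_self] at hk
      exact hk ▸ hmul
    | add a b _ _ ha hb => exact fun v hv ↦ mul_add v a b ▸ G.add_mem (ha v hv) (hb v hv)
    | zero => simp
    | mul a b _ _ ha hb => exact fun v hv ↦ mul_assoc v a b ▸ hb _ (ha v hv)
    | smul r a _ ha => exact fun v hv ↦ mul_smul_comm r v a ▸ G.smul_mem r (ha v hv)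
  have h_closed : IsClosed {k : A | v * k ∈ G} := hG.preimage (continuous_const_mul v)
  exact closure_minimal (fun k hk ↦ h_adjoin k hk v hv) h_closed (cfcₙ_mem_elemental f h)

theorem generalizedInverse_mem {F : Submodule ℝ A} (hFclosed : IsClosed (F : Set A))
    (hFtriple : ∀ x ∈ F, ∀ y ∈ F, ∀ z ∈ F, tripleProduct x y z ∈ F) {x : A} (hx : x ∈ F) :
    generalizedInverse x ∈ F := by
  -- On this part of `F`, right multiplication by `x* x` is the triple operation `{·, x, x}`.
  let G : Submodule ℝ A := F ⊓
    LinearMap.eqLocus (LinearMap.mulLeft ℝ (x * star x)) (LinearMap.mulRight ℝ (star x * x))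
  have hG {v : A} : v ∈ G ↔ v ∈ F ∧ x * star x * v = v * (star x * x) := Iff.rfl
  have hG_closed : IsClosed (G : Set A) :=
    hFclosed.inter (isClosed_eq (continuous_const_mul _) (continuous_mul_const _))
  have hG_mul : ∀ v ∈ G, v * (star x * x) ∈ G := by
    intro v hv
    obtain ⟨hvF, hvx⟩ := hG.mp hv
    have h_triple : tripleProduct v x x = v * (star x * x) := by
      rw [tripleProduct, hvx, mul_assoc, ← two_smul ℝ, inv_smul_smul₀ two_ne_zero]
    exact hG.mpr ⟨h_triple ▸ hFtriple v hvF x hx x hx, by rw [← mul_assoc, hvx]⟩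
  exact (mul_cfcₙ_mem hG_closed (.star_mul_self x) hG_mul _ (hG.mpr ⟨hx, mul_assoc _ _ _⟩)).1

theorem dist_extreme_point_eq_one_general (F : Submodule ℝ A) (hFclosed : IsClosed (F : Set A))
    (hFtriple : ∀ x ∈ F, ∀ y ∈ F, ∀ z ∈ F, tripleProduct x y z ∈ F)
    (hBP : ∀ u ∈ F, ¬ ∃ y ∈ F, ∀ z, bergmann u y z = 0) :
    (∀ e ∈ (Metric.closedBall (0 : A) 1).extremePoints ℝ, Metric.infDist e (F : Set A) = 1) ∧
    ∀ e ∈ (Metric.closedBall (0 : A) 1).extremePoints ℝ,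
      (∃! v : A, v ∈ F ∧ ‖e - v‖ = Metric.infDist e (F : Set A)) →
        ∀ p ∈ F, ‖e - p‖ = Metric.infDist e (F : Set A) → p = 0 := by
  have h_norm_le {e : A} (he : e ∈ (Metric.closedBall (0 : A) 1).extremePoints ℝ) : ‖e‖ ≤ 1 := by
    simpa using he.1
  have h_le_norm (e : A) : Metric.infDist e (F : Set A) ≤ ‖e‖ := by
    simpa using Metric.infDist_le_dist_of_mem (x := e) F.zero_mem
  have h_dist : ∀ e ∈ (Metric.closedBall (0 : A) 1).extremePoints ℝ,
      Metric.infDist e (F : Set A) = 1 := by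
    refine fun e he ↦ le_antisymm ((h_le_norm e).trans (h_norm_le he)) ?_
    refine (Metric.le_infDist ⟨0, F.zero_mem⟩).mpr fun x hx ↦ le_of_not_gt fun h_lt ↦ ?_
    exact hBP x hx ⟨generalizedInverse x, generalizedInverse_mem hFclosed hFtriple hx,
      bergmann_generalizedInverse_eq_zero he (dist_eq_norm e x ▸ h_lt)⟩
  refine ⟨h_dist, fun e he h_unique p hp hp_dist ↦ h_unique.unique ⟨hp, hp_dist⟩ ⟨F.zero_mem, ?_⟩⟩
  rw [sub_zero]
  exact le_antisymm ((h_norm_le he).trans_eq (h_dist e he).symm) (h_le_norm e)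

end Subtriples

/-- Let `A` be a C*-algebra and `F` a JB*-subtriple of `A` such that no
element of `F` is Brown–Pedersen quasi-invertible in `F`. Then `dist(e, F) = 1` for
every extreme point `e` of the closed unit ball of `A`; moreover, if `F` is a
Chebyshev subspace of `A`, then the best approximation of any such `e` in `F` is `0`. -/
theorem dist_extreme_point_eq_one
    {A : Type*} [NonUnitalNormedRing A] [StarRing A] [CStarRing A]
    [NormedSpace ℂ A] [IsScalarTower ℂ A A] [SMulCommClass ℂ A A]
    [StarModule ℂ A] [CompleteSpace A]
    (F : Submodule ℂ A) (hFclosed : IsClosed (F : Set A))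
    (hFtriple : ∀ x ∈ F, ∀ y ∈ F, ∀ z ∈ F,
      (2 : ℂ)⁻¹ • (x * star y * z + z * star y * x) ∈ F)
    (hBP : ∀ u ∈ F, ¬ ∃ y ∈ F, ∀ z ∈ F,
      z - u * star y * z - z * star y * u + u * star y * z * star y * u = 0) :
    (∀ e ∈ Set.extremePoints ℝ (Metric.closedBall (0 : A) 1),
        Metric.infDist e (F : Set A) = 1) ∧
    ((∀ x : A, ∃! v : A, v ∈ F ∧ ‖x - v‖ = Metric.infDist x (F : Set A)) →
      ∀ e ∈ Set.extremePoints ℝ (Metric.closedBall (0 : A) 1),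
        ∀ p ∈ F, ‖e - p‖ = Metric.infDist e (F : Set A) → p = 0) := by
  let _ : NonUnitalCStarAlgebra A := { }
  have h := dist_extreme_point_eq_one_general (F.restrictScalars ℝ) hFclosed
    (fun x hx y hy z hz ↦ by
      simpa [tripleProduct, ← Complex.coe_smul] using hFtriple x hx y hy z hz)
    (fun u hu ⟨y, hy, hB⟩ ↦ hBP u hu ⟨y, hy, fun z _ ↦ hB z⟩)
  exact ⟨h.1, fun hF e he ↦ h.2 e he (hF e)⟩
end

section
/- Let A be a C*-algebra and let F be a JB*-subtriple of A which is a Chebyshev subspace of A. If there exist three nonzero mutually orthogonal elements a, b, c ∈ F (so F has rank at least three), then F = A. -/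
/-!
The triple functional calculus turns a nonzero `a ∈ F` into a contraction `u ∈ F` and a nonzero
`e ∈ F` on which `u u*` and `u* u` act as units. If `v` is the best approximation in `F` of some
`x` orthogonal to `a`, then the Bergman operator `z ↦ (1 - u u*) z (1 - u* u)` is a contraction
which preserves `F` and fixes `x`, so by uniqueness it fixes `v`. Hence `x - v` is orthogonal to
`e`, and since orthogonal summands do not increase the norm beyond their maximum, every small
multiple of `e` could be added to `v` without losing optimality, unless `x = v`. Thus `F` contains
every element orthogonal to a nonzero element of `F`. With three orthogonal directions available,
multiplying by the local units on either side cuts an arbitrary element of the algebra into finitely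
many such pieces.
-/

section Chebyshev

/-- Chebyshev sets: every point has exactly one nearest point in `V`. -/
def IsChebyshev {E : Type*} [SeminormedAddCommGroup E] (V : Set E) : Prop :=
  ∀ x : E, ∃! v : E, v ∈ V ∧ ‖x - v‖ = Metric.infDist x V

theorem IsChebyshev.exists_eq_of_norm_sub_le {E : Type*} [SeminormedAddCommGroup E] {V : Set E}
    (hV : IsChebyshev V) (x : E) : ∃ v ∈ V, ∀ w ∈ V, ‖x - w‖ ≤ ‖x - v‖ → w = v := by
  obtain ⟨v, ⟨hv, hdist⟩, hunique⟩ := hV x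
  refine ⟨v, hv, fun w hw hle => hunique w ⟨hw, le_antisymm (hle.trans hdist.le) ?_⟩⟩
  simpa only [dist_eq_norm] using Metric.infDist_le_dist_of_mem (x := x) hw

end Chebyshev

section Orthogonality

/-- Orthogonality `a ⊥ b` of elements of a *-ring, in the sense of the ternary product
`a b* c + c b* a`. -/
def IsTripleOrthogonal {A : Type*} [NonUnitalSemiring A] [StarRing A] (a b : A) : Prop :=
  a * star b = 0 ∧ star b * a = 0

/-- `u` is a local unit for `e`: both `u u*` on the left and `u* u` on the right fix `e`. -/
def IsLocalUnit {A : Type*} [NonUnitalSemiring A] [StarRing A] (u e : A) : Prop :=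
  u * star u * e = e ∧ e * (star u * u) = e

variable {A : Type*} [NonUnitalSemiring A] [StarRing A] {a b u e : A}

theorem IsTripleOrthogonal.symm (h : IsTripleOrthogonal a b) : IsTripleOrthogonal b a :=
  ⟨by simpa using congrArg star h.1, by simpa using congrArg star h.2⟩

theorem IsTripleOrthogonal.smul_right {R : Type*} [Star R] [SMulZeroClass R A]
    [IsScalarTower R A A] [SMulCommClass R A A] [StarModule R A] (h : IsTripleOrthogonal a b)
    (r : R) : IsTripleOrthogonal a (r • b) :=
  ⟨by rw [star_smul, mul_smul_comm, h.1, smul_zero],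
    by rw [star_smul, smul_mul_assoc, h.2, smul_zero]⟩

theorem IsLocalUnit.star_mul_mul_star_self (h : IsLocalUnit u e) :
    star e * (u * star u) = star e := by
  simpa only [star_mul, star_star] using congrArg star h.1

theorem IsLocalUnit.star_mul_self_mul_star (h : IsLocalUnit u e) :
    star u * u * star e = star e := by
  simpa only [star_mul, star_star] using congrArg star h.2

end Orthogonality

theorem IsTripleOrthogonal.norm_add {A : Type*} [NonUnitalCStarAlgebra A] {x y : A}
    (h : IsTripleOrthogonal x y) : ‖x + y‖ = max ‖x‖ ‖y‖ := by
  have hstar : star (x + y) * (x + y) = star x * x + star y * y := by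
    simp [add_mul, mul_add, h.2, h.symm.2]
  have hmul : star x * x * (star y * y) = 0 := by
    rw [mul_assoc, ← mul_assoc x, h.1, zero_mul, mul_zero]
  have hsq : ‖x + y‖ * ‖x + y‖ = max (‖x‖ * ‖x‖) (‖y‖ * ‖y‖) := by
    simpa only [← hstar, CStarRing.norm_star_mul_self] using
      IsSelfAdjoint.norm_add_eq_max (.star_mul_self x) (.star_mul_self y) hmul
  rcases le_total ‖x‖ ‖y‖ with hxy | hxy
  · rw [max_eq_right (by gcongr), mul_self_inj (norm_nonneg _) (norm_nonneg _)] at hsq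
    rw [hsq, max_eq_right hxy]
  · rw [max_eq_left (by gcongr), mul_self_inj (norm_nonneg _) (norm_nonneg _)] at hsq
    rw [hsq, max_eq_left hxy]

theorem eq_of_isTripleOrthogonal_sub {A : Type*} [NonUnitalCStarAlgebra A] {V : Submodule ℂ A}
    {x v e : A} (hv : v ∈ V) (hbest : ∀ w ∈ V, ‖x - w‖ ≤ ‖x - v‖ → w = v) (he : e ∈ V)
    (he0 : e ≠ 0) (horth : IsTripleOrthogonal (x - v) e) : x = v := by
  set t : ℂ := ((‖x - v‖ / ‖e‖ : ℝ) : ℂ) with ht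
  have hnorm : ‖t • e‖ = ‖x - v‖ := by
    rw [norm_smul, ht, Complex.norm_real, Real.norm_of_nonneg (by positivity),
      div_mul_cancel₀ _ (norm_ne_zero_iff.mpr he0)]
  have hle : ‖x - (v - t • e)‖ ≤ ‖x - v‖ := by
    rw [← sub_add, (horth.smul_right t).norm_add, hnorm, max_self]
  have hzero : t • e = 0 := sub_eq_self.mp (hbest _ (V.sub_mem hv (V.smul_mem t he)) hle)
  rwa [hzero, norm_zero, eq_comm, norm_eq_zero, sub_eq_zero] at hnorm

section Bergman

/-- The Bergman operator `B(u, u) z = (1 - u u*) z (1 - u* u)`, multiplied out because the algebra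
need not have a unit. -/
def bergman {A : Type*} [NonUnitalRing A] [StarRing A] (u z : A) : A :=
  z - z * (star u * u) - u * star u * (z - z * (star u * u))

section Ring

variable {A : Type*} [NonUnitalRing A] [StarRing A] {u e x : A}

theorem bergman_sub (u x y : A) : bergman u (x - y) = bergman u x - bergman u y := by
  unfold bergman
  noncomm_ring

theorem IsTripleOrthogonal.bergman_eq (h : IsTripleOrthogonal x u) : bergman u x = x := by
  have hright : x * (star u * u) = 0 := by rw [← mul_assoc, h.1, zero_mul]
  have hleft : u * star u * x = 0 := by rw [mul_assoc, h.2, mul_zero]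
  rw [bergman, hright, sub_zero, hleft, sub_zero]

theorem IsLocalUnit.isTripleOrthogonal_bergman (h : IsLocalUnit u e) (z : A) :
    IsTripleOrthogonal (bergman u z) e := by
  constructor
  · have hcut : (z - z * (star u * u)) * star e = 0 := by
      rw [sub_mul, mul_assoc, h.star_mul_self_mul_star, sub_self]
    rw [bergman, sub_mul, mul_assoc, hcut, mul_zero, sub_zero]
  · rw [bergman, mul_sub (star e), ← mul_assoc (star e) (u * star u), h.star_mul_mul_star_self,
      sub_self]

end Ring

variable {A : Type*} [NonUnitalCStarAlgebra A] {u : A}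

theorem norm_sub_mul_star_self_mul_le (hu : ‖u‖ ≤ 1) (z : A) : ‖z - u * star u * z‖ ≤ ‖z‖ := by
  let _ := CStarAlgebra.spectralOrder A
  have := CStarAlgebra.spectralOrderedRing A
  have hnorm : ‖star u * u‖ ≤ 1 := by
    rw [CStarRing.norm_star_mul_self]
    exact mul_le_one₀ hu (norm_nonneg u) hu
  set w := star u * z
  have hcontract : star w * (star u * u) * w ≤ star w * w :=
    calc star w * (star u * u) * w
        ≤ ‖star u * u‖ • (star w * w) := CStarAlgebra.star_left_conjugate_le_norm_smul
      _ ≤ (1 : ℝ) • (star w * w) := smul_le_smul_of_nonneg_right hnorm (star_mul_self_nonneg w)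
      _ = star w * w := one_smul ℝ _
  have hle : star (z - u * star u * z) * (z - u * star u * z) ≤ star z * z :=
    calc star (z - u * star u * z) * (z - u * star u * z)
        = star z * z - star w * w - (star w * w - star w * (star u * u) * w) := by
          simp only [w, star_sub, star_mul, star_star]
          noncomm_ring
      _ ≤ star z * z - star w * w := sub_le_self _ (sub_nonneg.mpr hcontract)
      _ ≤ star z * z := sub_le_self _ (star_mul_self_nonneg w)
  have hsq := CStarAlgebra.norm_le_norm_of_nonneg_of_le (star_mul_self_nonneg _) hle
  rw [CStarRing.norm_star_mul_self, CStarRing.norm_star_mul_self] at hsq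
  exact (mul_self_le_mul_self_iff (norm_nonneg _) (norm_nonneg _)).mpr hsq

theorem norm_sub_mul_star_mul_self_le (hu : ‖u‖ ≤ 1) (z : A) :
    ‖z - z * (star u * u)‖ ≤ ‖z‖ := by
  have h := norm_sub_mul_star_self_mul_le (u := star u) (by rwa [norm_star]) (star z)
  rw [← norm_star] at h
  simpa using h

theorem norm_bergman_le (hu : ‖u‖ ≤ 1) (z : A) : ‖bergman u z‖ ≤ ‖z‖ :=
  (norm_sub_mul_star_self_mul_le hu _).trans (norm_sub_mul_star_mul_self_le hu z)

end Bergman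

section TripleFunctionalCalculus

variable {A : Type*} [NonUnitalCStarAlgebra A]

/-- The triple functional calculus. If `a = v |a|` is a polar decomposition, this is `v g(|a|)` for
the odd function `g t = t * f (t ^ 2)`. The value is `0` unless `f` is continuous on the
quasispectrum of `star a * a` and `f 0 = 0`. -/
noncomputable def tripleCfc (f : ℝ → ℝ) (a : A) : A :=
  a * cfcₙ f (star a * a)

theorem star_tripleCfc (f : ℝ → ℝ) (a : A) :
    star (tripleCfc f a) = cfcₙ f (star a * a) * star a := by
  rw [tripleCfc, star_mul, IsSelfAdjoint.cfcₙ.star_eq]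

theorem mul_cfcₙ_eq_zero {x q : A} (f : ℝ → ℝ) (h : x * q = 0) : x * cfcₙ f q = 0 := by
  refine cfcₙ_cases (fun y => x * y = 0) q f (mul_zero x) fun _ _ hq => ?_
  refine ContinuousMapZero.mul_nonUnitalStarAlgHom_apply_eq_zero (cfcₙHom hq) x ?_ ?_
    (cfcₙHom_continuous hq) _
  · rwa [cfcₙHom_id hq]
  · rwa [map_star, cfcₙHom_id hq, hq.star_eq]

theorem star_tripleCfc_mul_eq_zero {a x : A} (f : ℝ → ℝ) (h : star a * x = 0) :
    star (tripleCfc f a) * x = 0 := by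
  rw [star_tripleCfc, mul_assoc, h, mul_zero]

theorem IsTripleOrthogonal.tripleCfc {x a : A} (h : IsTripleOrthogonal x a) (f : ℝ → ℝ) :
    IsTripleOrthogonal x (tripleCfc f a) := by
  refine ⟨?_, star_tripleCfc_mul_eq_zero f h.2⟩
  rw [star_tripleCfc, ← mul_assoc, mul_cfcₙ_eq_zero f, zero_mul]
  rw [← mul_assoc, h.1, zero_mul]

variable {f g h : ℝ → ℝ}

theorem star_mul_tripleCfc (hf : Continuous f) (hf0 : f 0 = 0) (a : A) :
    star a * tripleCfc f a = cfcₙ (fun t => t * f t) (star a * a) := by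
  rw [cfcₙ_mul (fun t => t) f, cfcₙ_id' ℝ (star a * a), tripleCfc, mul_assoc]

theorem star_tripleCfc_mul_tripleCfc (hf : Continuous f) (hf0 : f 0 = 0) (hg : Continuous g)
    (hg0 : g 0 = 0) (a : A) :
    star (tripleCfc f a) * tripleCfc g a = cfcₙ (fun t => f t * (t * g t)) (star a * a) := by
  rw [cfcₙ_mul f (fun t => t * g t), ← star_mul_tripleCfc hg hg0, star_tripleCfc, mul_assoc]

theorem tripleCfc_mul_star_mul_tripleCfc (hf : Continuous f) (hf0 : f 0 = 0) (hg : Continuous g)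
    (hg0 : g 0 = 0) (hh : Continuous h) (hh0 : h 0 = 0) (a : A) :
    tripleCfc f a * star (tripleCfc g a) * tripleCfc h a =
      tripleCfc (fun t => f t * (g t * (t * h t))) a := by
  rw [mul_assoc, star_tripleCfc_mul_tripleCfc hg hg0 hh hh0, tripleCfc, tripleCfc, mul_assoc,
    ← cfcₙ_mul f (fun t => g t * (t * h t))]

theorem quasispectrum_star_mul_self_nonneg {a : A} {t : ℝ}
    (ht : t ∈ quasispectrum ℝ (star a * a)) : 0 ≤ t := by
  let _ := CStarAlgebra.spectralOrder A
  have := CStarAlgebra.spectralOrderedRing A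
  exact quasispectrum_nonneg_of_nonneg _ (star_mul_self_nonneg a) t ht

theorem norm_tripleCfc_le_one (hf : Continuous f) (hf0 : f 0 = 0)
    (hle : ∀ t, 0 ≤ t → f t * (t * f t) ≤ 1) (a : A) : ‖tripleCfc f a‖ ≤ 1 := by
  have hsq : ‖tripleCfc f a‖ * ‖tripleCfc f a‖ ≤ 1 := by
    rw [← CStarRing.norm_star_mul_self, star_tripleCfc_mul_tripleCfc hf hf0 hf hf0]
    refine norm_cfcₙ_le fun t ht => ?_
    have ht0 : 0 ≤ t := quasispectrum_star_mul_self_nonneg ht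
    rw [mul_left_comm, Real.norm_of_nonneg (mul_nonneg ht0 (mul_self_nonneg _)), mul_left_comm]
    exact hle t ht0
  nlinarith [norm_nonneg (tripleCfc f a)]

theorem tripleCfc_ne_zero (hf : Continuous f) (hf0 : f 0 = 0) {δ : ℝ} (hδ : 0 ≤ δ)
    (hpos : ∀ t, δ < t → f t ≠ 0) {a : A} (ha : δ < ‖star a * a‖) : tripleCfc f a ≠ 0 := by
  intro hzero
  have hcfc : cfcₙ (fun t => t * f t) (star a * a) = 0 := by
    rw [← star_mul_tripleCfc hf hf0, hzero, mul_zero]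
  refine ha.not_ge ?_
  rw [← cfcₙ_id' ℝ (star a * a)]
  refine norm_cfcₙ_le fun t ht => ?_
  have hvanish : t * f t = 0 := by
    have := norm_apply_le_norm_cfcₙ (fun t => t * f t) (star a * a) ht
    rwa [hcfc, norm_zero, norm_le_zero_iff] at this
  rw [Real.norm_of_nonneg (quasispectrum_star_mul_self_nonneg ht)]
  by_contra! hlt
  exact mul_ne_zero (hδ.trans_lt hlt).ne' (hpos t hlt) hvanish

theorem exists_continuous_truncated_invSqrt {δ : ℝ} (hδ : 0 < δ) :
    ∃ s : ℝ → ℝ, Continuous s ∧ s 0 = 0 ∧ (∀ t, δ ≤ t → s t * (t * s t) = 1) ∧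
      ∀ t, 0 ≤ t → s t * (t * s t) ≤ 1 := by
  have hmax (t : ℝ) : 0 < max t δ := lt_max_of_lt_right hδ
  have hsq (t : ℝ) : t / √(max t δ) ^ 3 * (t * (t / √(max t δ) ^ 3)) = (t / max t δ) ^ 3 := by
    calc t / √(max t δ) ^ 3 * (t * (t / √(max t δ) ^ 3)) = (t / √(max t δ) ^ 2) ^ 3 := by ring
      _ = (t / max t δ) ^ 3 := by rw [Real.sq_sqrt (hmax t).le]
  refine ⟨fun t => t / √(max t δ) ^ 3, ?_, zero_div _, fun t ht => ?_, fun t ht => ?_⟩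
  · exact continuous_id.div (by fun_prop) fun t => pow_ne_zero 3 (Real.sqrt_pos.mpr (hmax t)).ne'
  · rw [hsq, max_eq_left ht, div_self (hδ.trans_le ht).ne', one_pow]
  · rw [hsq]
    exact pow_le_one₀ (div_nonneg ht (hmax t).le) (div_le_one_of_le₀ (le_max_left t δ) (hmax t).le)

theorem exists_isLocalUnit_tripleCfc {a : A} (ha : a ≠ 0) :
    ∃ s m : ℝ → ℝ, ‖tripleCfc s a‖ ≤ 1 ∧ tripleCfc m a ≠ 0 ∧
      IsLocalUnit (tripleCfc s a) (tripleCfc m a) := by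
  have hpos : 0 < ‖star a * a‖ := by simpa [CStarRing.norm_star_mul_self] using ha
  set δ := ‖star a * a‖ / 2
  have hδ : 0 < δ := half_pos hpos
  obtain ⟨s, hs, hs0, hunit, hle⟩ := exists_continuous_truncated_invSqrt hδ
  let m : ℝ → ℝ := fun t => max 0 (t - δ)
  have hm : Continuous m := by fun_prop
  have hm0 : m 0 = 0 := max_eq_left (by linarith)
  have hm_ne (t : ℝ) (ht : δ < t) : m t ≠ 0 := (lt_max_of_lt_right (sub_pos.mpr ht)).ne'
  have hfix (t : ℝ) : s t * (s t * (t * m t)) = m t := by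
    rcases le_total t δ with ht | ht
    · simp [m, ht]
    · linear_combination m t * hunit t ht
  refine ⟨s, m, norm_tripleCfc_le_one hs hs0 hle a,
    tripleCfc_ne_zero hm hm0 hδ.le hm_ne (half_lt_self hpos), ?_, ?_⟩
  · rw [tripleCfc_mul_star_mul_tripleCfc hs hs0 hs hs0 hm hm0]
    simp only [hfix]
  · rw [← mul_assoc, tripleCfc_mul_star_mul_tripleCfc hm hm0 hs hs0 hs hs0]
    congr 1
    ext t
    linear_combination hfix t

end TripleFunctionalCalculus

section RightMultiplier

/-- The *-subalgebra of all `y` such that right multiplication by `y` and by `y*` preserves `G`. -/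
def rightMultiplier {R A : Type*} [CommSemiring R] [StarRing R] [NonUnitalSemiring A] [StarRing A]
    [Module R A] [IsScalarTower R A A] [SMulCommClass R A A] [StarModule R A]
    (G : Submodule R A) : NonUnitalStarSubalgebra R A where
  carrier := {y | ∀ w ∈ G, w * y ∈ G ∧ w * star y ∈ G}
  add_mem' hy hz w hw := by
    rw [star_add, mul_add, mul_add]
    exact ⟨G.add_mem (hy w hw).1 (hz w hw).1, G.add_mem (hy w hw).2 (hz w hw).2⟩
  zero_mem' w _ := by simp
  mul_mem' hy hz w hw := by
    rw [star_mul, ← mul_assoc, ← mul_assoc]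
    exact ⟨(hz _ (hy w hw).1).1, (hy _ (hz w hw).2).2⟩
  smul_mem' r y hy w hw := by
    rw [star_smul, mul_smul_comm, mul_smul_comm]
    exact ⟨G.smul_mem r (hy w hw).1, G.smul_mem _ (hy w hw).2⟩
  star_mem' hy w hw := by
    rw [star_star]
    exact (hy w hw).symm

theorem isClosed_rightMultiplier {A : Type*} [NonUnitalCStarAlgebra A] {G : Submodule ℂ A}
    (hG : IsClosed (G : Set A)) : IsClosed (rightMultiplier G : Set A) := by
  have hcarrier : (rightMultiplier G : Set A) =
      ⋂ w ∈ G, (w * ·) ⁻¹' (G : Set A) ∩ (w * star ·) ⁻¹' (G : Set A) := by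
    ext y
    simp only [Set.mem_iInter]
    exact Iff.rfl
  rw [hcarrier]
  exact isClosed_biInter fun w _ => (hG.preimage (by fun_prop)).inter (hG.preimage (by fun_prop))

end RightMultiplier

section Subtriple

variable {A : Type*} [NonUnitalCStarAlgebra A]

/-- JB*-subtriples of a C*-algebra: closed subspaces stable under the triple product. -/
structure IsJBStarSubtriple (F : Submodule ℂ A) : Prop where
  isClosed : IsClosed (F : Set A)
  triple_mem : ∀ x ∈ F, ∀ y ∈ F, ∀ z ∈ F, (2 : ℂ)⁻¹ • (x * star y * z + z * star y * x) ∈ F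

namespace IsJBStarSubtriple

variable {F : Submodule ℂ A} (hF : IsJBStarSubtriple F)
include hF

theorem mul_star_mul_add_mem {x y z : A} (hx : x ∈ F) (hy : y ∈ F) (hz : z ∈ F) :
    x * star y * z + z * star y * x ∈ F := by
  simpa using F.smul_mem 2 (hF.triple_mem x hx y hy z hz)

theorem mul_star_mul_mem {x y : A} (hx : x ∈ F) (hy : y ∈ F) : x * star y * x ∈ F := by
  have h := hF.triple_mem x hx y hy x hx
  rwa [← two_smul ℂ, inv_smul_smul₀ two_ne_zero] at h

theorem bergman_mem {u z : A} (hu : u ∈ F) (hz : z ∈ F) : bergman u z ∈ F := by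
  have h := F.add_mem (F.sub_mem hz (hF.mul_star_mul_add_mem hu hu hz))
    (hF.mul_star_mul_mem hu (hF.mul_star_mul_mem hu hz))
  convert h using 1
  simp only [bergman, star_mul, star_star]
  noncomm_ring

theorem tripleCfc_mem {a : A} (ha : a ∈ F) (f : ℝ → ℝ) : tripleCfc f a ∈ F := by
  -- On `G` the operator `w ↦ {a, a, w}` is right multiplication by `a* a`.
  let G : Submodule ℂ A :=
    F ⊓ (LinearMap.mulLeft ℂ (a * star a)).eqLocus (LinearMap.mulRight ℂ (star a * a))
  have mem_G {w : A} : w ∈ G ↔ w ∈ F ∧ a * star a * w = w * (star a * a) := Iff.rfl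
  have hG : IsClosed (G : Set A) :=
    hF.isClosed.inter (isClosed_eq (continuous_const_mul _) (continuous_mul_const _))
  have hstep : ∀ w ∈ G, w * (star a * a) ∈ G := by
    intro w hw
    obtain ⟨hwF, hcomm⟩ := mem_G.mp hw
    refine mem_G.mpr ⟨?_, by rw [← mul_assoc, hcomm]⟩
    have h := hF.triple_mem a ha a ha w hwF
    rwa [hcomm, mul_assoc w, ← two_smul ℂ, inv_smul_smul₀ two_ne_zero] at h
  have hsq : star a * a ∈ rightMultiplier G := fun w hw =>
    ⟨hstep w hw, by rw [(IsSelfAdjoint.star_mul_self a).star_eq]; exact hstep w hw⟩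
  have := isClosed_rightMultiplier hG
  have hcfc : cfcₙ f (star a * a) ∈ rightMultiplier G := cfcₙ_mem f hsq
  exact (hcfc a (mem_G.mpr ⟨ha, mul_assoc a (star a) a⟩)).1.1

variable (hC : IsChebyshev (F : Set A))
include hC

theorem mem_of_isTripleOrthogonal {a x : A} (ha : a ∈ F) (ha0 : a ≠ 0)
    (hx : IsTripleOrthogonal x a) : x ∈ F := by
  obtain ⟨s, m, hnorm, he0, hunit⟩ := exists_isLocalUnit_tripleCfc ha0
  obtain ⟨v, hv, hbest⟩ := hC.exists_eq_of_norm_sub_le x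
  set u := tripleCfc s a
  have hxu : IsTripleOrthogonal x u := hx.tripleCfc s
  have hfix : bergman u v = v := by
    refine hbest _ (hF.bergman_mem (hF.tripleCfc_mem ha s) hv) ?_
    calc ‖x - bergman u v‖ = ‖bergman u (x - v)‖ := by rw [bergman_sub, hxu.bergman_eq]
      _ ≤ ‖x - v‖ := norm_bergman_le hnorm _
  have horth : IsTripleOrthogonal (x - v) (tripleCfc m a) := by
    rw [← hxu.bergman_eq, ← hfix, ← bergman_sub]
    exact hunit.isTripleOrthogonal_bergman _
  rwa [eq_of_isTripleOrthogonal_sub hv hbest (hF.tripleCfc_mem ha m) he0 horth]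

theorem mem_of_star_mul_eq_zero_of_star_mul_eq_zero {a b y : A} (ha : a ∈ F) (hb : b ∈ F)
    (ha0 : a ≠ 0) (hb0 : b ≠ 0) (hab : IsTripleOrthogonal a b) (hay : star a * y = 0)
    (hby : star b * y = 0) : y ∈ F := by
  obtain ⟨s, m, -, he0, hunit⟩ := exists_isLocalUnit_tripleCfc hb0
  set u := tripleCfc s b
  set e := tripleCfc m b
  have hua : u * star a = 0 := (hab.tripleCfc s).symm.1
  have hey : star e * y = 0 := star_tripleCfc_mul_eq_zero m hby
  have hinner : y * (star u * u) ∈ F := by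
    refine hF.mem_of_isTripleOrthogonal hC ha ha0 ⟨?_, ?_⟩
    · rw [mul_assoc, mul_assoc, hua, mul_zero, mul_zero]
    · rw [← mul_assoc, hay, zero_mul]
  have houter : y - y * (star u * u) ∈ F := by
    refine hF.mem_of_isTripleOrthogonal hC (hF.tripleCfc_mem hb m) he0 ⟨?_, ?_⟩
    · rw [sub_mul, mul_assoc, hunit.star_mul_self_mul_star, sub_self]
    · rw [mul_sub, ← mul_assoc, hey, zero_mul, sub_zero]
  simpa using F.add_mem hinner houter

theorem mem_of_star_mul_eq_zero {a b c y : A} (ha : a ∈ F) (hb : b ∈ F) (hc : c ∈ F)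
    (ha0 : a ≠ 0) (hb0 : b ≠ 0) (hc0 : c ≠ 0) (hab : IsTripleOrthogonal a b)
    (hac : IsTripleOrthogonal a c) (hbc : IsTripleOrthogonal b c) (hay : star a * y = 0) :
    y ∈ F := by
  obtain ⟨s, m, -, he0, hunit⟩ := exists_isLocalUnit_tripleCfc hb0
  set u := tripleCfc s b
  set e := tripleCfc m b
  have hau : star a * u = 0 := (hab.tripleCfc s).symm.2
  have hcu : star c * u = 0 := (hbc.symm.tripleCfc s).symm.2
  have hinner : u * star u * y ∈ F := by
    refine hF.mem_of_star_mul_eq_zero_of_star_mul_eq_zero hC ha hc ha0 hc0 hac ?_ ?_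
    · rw [← mul_assoc, ← mul_assoc, hau, zero_mul, zero_mul]
    · rw [← mul_assoc, ← mul_assoc, hcu, zero_mul, zero_mul]
  have houter : y - u * star u * y ∈ F := by
    refine hF.mem_of_star_mul_eq_zero_of_star_mul_eq_zero hC ha (hF.tripleCfc_mem hb m) ha0 he0
      (hab.tripleCfc m) ?_ ?_
    · rw [mul_sub, hay, ← mul_assoc, ← mul_assoc, hau, zero_mul, zero_mul, sub_zero]
    · rw [mul_sub, ← mul_assoc, hunit.star_mul_mul_star_self, sub_self]
  simpa using F.add_mem hinner houter

end IsJBStarSubtriple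

end Subtriple

/-- Let `A` be a C*-algebra and `F` a JB*-subtriple of `A` which is a
Chebyshev subspace of `A`. If there exist three nonzero mutually orthogonal elements
`a, b, c ∈ F` (so `F` has rank at least three), then `F = A`. -/
theorem cebysev_subtriple_rank_three_eq
    {A : Type*} [NonUnitalNormedRing A] [StarRing A] [CStarRing A]
    [NormedSpace ℂ A] [IsScalarTower ℂ A A] [SMulCommClass ℂ A A]
    [StarModule ℂ A] [CompleteSpace A]
    (F : Submodule ℂ A) (hFclosed : IsClosed (F : Set A))
    (hFtriple : ∀ x ∈ F, ∀ y ∈ F, ∀ z ∈ F,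
      (2 : ℂ)⁻¹ • (x * star y * z + z * star y * x) ∈ F)
    (hCheb : ∀ x : A, ∃! v : A, v ∈ F ∧ ‖x - v‖ = Metric.infDist x (F : Set A))
    (a b c : A) (ha : a ∈ F) (hb : b ∈ F) (hc : c ∈ F)
    (ha0 : a ≠ 0) (hb0 : b ≠ 0) (hc0 : c ≠ 0)
    (hab : a * star b = 0 ∧ star b * a = 0)
    (hac : a * star c = 0 ∧ star c * a = 0)
    (hbc : b * star c = 0 ∧ star c * b = 0) :
    F = ⊤ := by
  let _ : NonUnitalCStarAlgebra A := {}
  have hF : IsJBStarSubtriple F := ⟨hFclosed, hFtriple⟩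
  have hab : IsTripleOrthogonal a b := hab
  have hac : IsTripleOrthogonal a c := hac
  refine eq_top_iff.mpr fun x _ => ?_
  obtain ⟨s, m, -, he0, hunit⟩ := exists_isLocalUnit_tripleCfc ha0
  set u := tripleCfc s a
  set e := tripleCfc m a
  have hbu : star b * u = 0 := (hab.symm.tripleCfc s).symm.2
  have hinner : u * star u * x ∈ F := by
    refine hF.mem_of_star_mul_eq_zero hCheb hb ha hc hb0 ha0 hc0 hab.symm hbc hac ?_
    rw [← mul_assoc, ← mul_assoc, hbu, zero_mul, zero_mul]
  have houter : x - u * star u * x ∈ F := by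
    refine hF.mem_of_star_mul_eq_zero hCheb (hF.tripleCfc_mem ha m) hb hc he0 hb0 hc0
      (hab.symm.tripleCfc m).symm (hac.symm.tripleCfc m).symm hbc ?_
    rw [mul_sub, ← mul_assoc, hunit.star_mul_mul_star_self, sub_self]
  simpa using F.add_mem hinner houter
end
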